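/- arXiv:2001.08825 — 5 statements merged into one kernel-verified Lean document; each statement's English description precedes it below -/
import Mathlib

section
/- Let α ∈ (0,2), n ∈ ℕ with n ≥ 1, and x ∈ ℝ. For y > 0 define g_n(y) = [(y+x+i)^(n−1)·(y−x+i)^(n+1) − (y−x−i)^(n−1)·(y+x−i)^(n+1)] / [y^α·(y+x−i)^(n+1)·(y−x+i)^(n+1)] (integer powers in ℂ; y^α the real power of y > 0). Then g_n is absolutely integrable on (0,∞), and ∫₀^∞ g_n(y) dy = (π·α·e^(−iπα/2)·i^(1+α) / (sin(πα/2)·(ix+1)^(1+α))) · (1/n)·∑_{k=0}^{n−1} C(n,k+1)·C(−1−α,k)·(2/(ix+1))^k, where i^(1+α) = e^(iπ(1+α)/2), so that e^(−iπα/2)·i^(1+α) = i. (The last factor equals ₂F₁(1−n, 1+α; 2; 2/(ix+1)).) -/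
open MeasureTheory Finset

/-- The constant `c_α = α·2^(α−1)·Γ(1/2+α/2)/(√π·Γ(1−α/2))`. -/
noncomputable def cFrac (α : ℝ) : ℝ :=
  α * 2 ^ (α - 1) * Real.Gamma (1 / 2 + α / 2) / (Real.sqrt Real.pi * Real.Gamma (1 - α / 2))

/-- The complex Higgins function `λ_n(x) = ((ix−1)/(ix+1))^n`. -/
noncomputable def higgins (n : ℤ) (x : ℝ) : ℂ :=
  ((Complex.I * (x : ℂ) - 1) / (Complex.I * (x : ℂ) + 1)) ^ n

/-- The derivative `λ_n'`. -/
noncomputable def higgins' (n : ℤ) (x : ℝ) : ℂ := deriv (higgins n) x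

/-- The complex Christov function `μ_n(x) = (ix−1)^n/(ix+1)^(n+1)`. -/
noncomputable def christov (n : ℤ) (x : ℝ) : ℂ :=
  (Complex.I * (x : ℂ) - 1) ^ n / (Complex.I * (x : ℂ) + 1) ^ (n + 1)

/-- The derivative `μ_n'`. -/
noncomputable def christov' (n : ℤ) (x : ℝ) : ℂ := deriv (christov n) x

/-- Generalized binomial coefficient `C(z,k) = z(z−1)⋯(z−k+1)/k!` over `ℂ`. -/
noncomputable def gbinom (z : ℂ) (k : ℕ) : ℂ :=
  (∏ i ∈ Finset.range k, (z - (i : ℂ))) / (k.factorial : ℂ)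

/-- Generalized binomial coefficient `C(z,k) = z(z−1)⋯(z−k+1)/k!` over `ℝ`. -/
noncomputable def gbinomR (z : ℝ) (k : ℕ) : ℝ :=
  (∏ i ∈ Finset.range k, (z - (i : ℝ))) / (k.factorial : ℝ)

/-- Rising factorial (Pochhammer symbol) `(z)_k = z(z+1)⋯(z+k−1)` over `ℂ`. -/
noncomputable def poch (z : ℂ) (k : ℕ) : ℂ := ∏ i ∈ Finset.range k, (z + (i : ℂ))

/-- `G_α(l) = (1/(l+1))·∑_{k=0}^{l} C(l+1,k+1)·C(−1−α,k)·2^k = ₂F₁(−l, 1+α; 2; 2)`, over `ℂ`. -/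
noncomputable def Gc (α : ℝ) (l : ℕ) : ℂ :=
  (1 / ((l : ℂ) + 1)) * ∑ k ∈ Finset.range (l + 1),
    gbinom ((l : ℂ) + 1) (k + 1) * gbinom (-1 - (α : ℂ)) k * 2 ^ k

/-- `G_α(l) = (1/(l+1))·∑_{k=0}^{l} C(l+1,k+1)·C(−1−α,k)·2^k = ₂F₁(−l, 1+α; 2; 2)`, over `ℝ`. -/
noncomputable def GR (α : ℝ) (l : ℕ) : ℝ :=
  (1 / ((l : ℝ) + 1)) * ∑ k ∈ Finset.range (l + 1),
    gbinomR ((l : ℝ) + 1) (k + 1) * gbinomR (-1 - α) k * 2 ^ k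

/-- `H_α(l) = ∑_{k=0}^{l} C(l,k)·C(−1−α,k)·2^k = ₂F₁(−l, 1+α; 1; 2)`, over `ℂ`. -/
noncomputable def Hc (α : ℝ) (l : ℕ) : ℂ :=
  ∑ k ∈ Finset.range (l + 1), gbinom (l : ℂ) k * gbinom (-1 - (α : ℂ)) k * 2 ^ k

/-- `H_α(l) = ∑_{k=0}^{l} C(l,k)·C(−1−α,k)·2^k = ₂F₁(−l, 1+α; 1; 2)`, over `ℝ`. -/
noncomputable def HR (α : ℝ) (l : ℕ) : ℝ :=
  ∑ k ∈ Finset.range (l + 1), gbinomR (l : ℝ) k * gbinomR (-1 - α) k * 2 ^ k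

/-- `arccot(x) = π/2 − arctan(x) ∈ (0,π)`. -/
noncomputable def arccot (x : ℝ) : ℝ := Real.pi / 2 - Real.arctan x

/-!
Put `w = ix + 1` and `φ z = (z - 2) ^ (n - 1) / z ^ (n + 1)`. Pulling factors `±i` out of the
linear forms in `y` shows that `gₙ y = y ^ (-α) * (φ (w - iy) - φ (w + iy))`. Expanding `φ` in
powers of `1 / z` reduces the integral to the values at `s = 1 - α` of the Mellin transforms
`K m w` of `y ↦ (w - iy)⁻ᵐ - (w + iy)⁻ᵐ`, `m ≥ 2`. The substitution `y ↦ ty` makes `K m`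
homogeneous of degree `s - m` under positive real scaling, and on the right half-plane it is
holomorphic with derivative `-m * K (m + 1)`. Hence `K 2 w = K 2 1 * w ^ (s - 2)`, Euler's identity
`m * w * K (m + 1) w = (m - s) * K m w` produces the factors of the generalized binomial
coefficient, and `K 2 1` is a Beta integral, which the reflection formula evaluates.
-/

section

open Complex Filter Topology
open scoped Real

lemma gbinom_succ (z : ℂ) (k : ℕ) : gbinom z (k + 1) = gbinom z k * (z - k) / (k + 1) := by
  simp only [gbinom, prod_range_succ, Nat.factorial_succ]
  push_cast
  field_simp

lemma gbinom_natCast (n k : ℕ) : gbinom n k = n.choose k := by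
  rw [Nat.cast_choose_eq_descPochhammer_div, descPochhammer_eval_eq_prod_range, gbinom]

lemma gbinom_add_one_succ (z : ℂ) (k : ℕ) :
    gbinom (z + 1) (k + 1) = (z + 1) * (gbinom z k / (k + 1)) := by
  simp only [gbinom, prod_range_succ', Nat.factorial_succ]
  push_cast
  simp only [add_sub_add_right_eq_sub, sub_zero]
  field_simp

lemma strictMonoOn_div_one_add : StrictMonoOn (fun u : ℝ => u / (1 + u)) (Set.Ioi 0) := by
  intro a (ha : 0 < a) b (hb : 0 < b) hab
  exact (div_lt_div_iff₀ (by positivity) (by positivity)).2 (by linarith)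

lemma image_div_one_add_Ioi : (fun u : ℝ => u / (1 + u)) '' Set.Ioi 0 = Set.Ioo 0 1 := by
  ext v
  constructor
  · rintro ⟨u, hu : 0 < u, rfl⟩
    exact ⟨by positivity, (div_lt_one (by positivity)).2 (by linarith)⟩
  · rintro ⟨h0, h1⟩
    have h1' : 0 < 1 - v := sub_pos.2 h1
    exact ⟨v / (1 - v), div_pos h0 h1', by field_simp; ring⟩

lemma hasDerivAt_div_one_add {u : ℝ} (hu : 1 + u ≠ 0) :
    HasDerivAt (fun u : ℝ => u / (1 + u)) (1 / (1 + u) ^ 2) u := by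
  simpa using (hasDerivAt_id' u).fun_div ((hasDerivAt_id' u).const_add 1) hu

lemma betaIntegrand_div_one_add (s t : ℂ) {u : ℝ} (hu : 0 < u) :
    |1 / (1 + u) ^ 2| • (((u / (1 + u) : ℝ) : ℂ) ^ (s - 1) *
        (1 - ((u / (1 + u) : ℝ) : ℂ)) ^ (t - 1)) =
      (u : ℂ) ^ (s - 1) • (1 + u : ℂ) ^ (-(s + t)) := by
  have hq : 0 < 1 + u := by positivity
  have hq' : ((1 + u : ℝ) : ℂ) ≠ 0 := ofReal_ne_zero.2 hq.ne'
  have hcompl : 1 - ((u / (1 + u) : ℝ) : ℂ) = ((1 + u : ℝ) : ℂ)⁻¹ := by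
    push_cast at hq' ⊢
    field_simp
    ring
  have hexp : s + t = s - 1 + (t - 1) + (2 : ℕ) := by push_cast; ring
  rw [hcompl, ofReal_div, div_cpow_ofReal_nonneg hu.le hq.le, inv_cpow_ofReal_nonneg hq.le,
    show (1 + u : ℂ) = ((1 + u : ℝ) : ℂ) by push_cast; rfl, cpow_neg, hexp, cpow_add _ _ hq',
    cpow_add _ _ hq', cpow_natCast, abs_of_pos (by positivity), real_smul, smul_eq_mul, mul_inv,
    mul_inv]
  push_cast
  ring

lemma hasMellin_one_add_cpow_neg {s t : ℂ} (hs : 0 < s.re) (ht : 0 < t.re) :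
    HasMellin (fun u : ℝ => (1 + u : ℂ) ^ (-(s + t))) s (betaIntegral s t) := by
  set g : ℝ → ℂ := fun v => (v : ℂ) ^ (s - 1) * (1 - (v : ℂ)) ^ (t - 1)
  have hderiv : ∀ u ∈ Set.Ioi (0 : ℝ),
      HasDerivWithinAt (fun u : ℝ => u / (1 + u)) (1 / (1 + u) ^ 2) (Set.Ioi 0) u := fun u hu =>
    (hasDerivAt_div_one_add (add_pos one_pos hu).ne').hasDerivWithinAt
  have hpull : Set.EqOn (fun u : ℝ => |1 / (1 + u) ^ 2| • g (u / (1 + u)))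
      (fun u : ℝ => (u : ℂ) ^ (s - 1) • (1 + u : ℂ) ^ (-(s + t))) (Set.Ioi 0) := fun _ hu =>
    betaIntegrand_div_one_add s t hu
  have hbeta : betaIntegral s t = ∫ v in Set.Ioo 0 1, g v := by
    rw [betaIntegral, intervalIntegral.integral_of_le zero_le_one, integral_Ioc_eq_integral_Ioo]
  constructor
  · have hg : IntegrableOn g (Set.Ioo 0 1) :=
      (intervalIntegrable_iff_integrableOn_Ioo_of_le zero_le_one).1 (betaIntegral_convergent hs ht)
    rw [← image_div_one_add_Ioi, integrableOn_image_iff_integrableOn_abs_deriv_smul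
      measurableSet_Ioi hderiv strictMonoOn_div_one_add.injOn] at hg
    exact hg.congr_fun hpull measurableSet_Ioi
  · rw [hbeta, ← image_div_one_add_Ioi, integral_image_eq_integral_abs_deriv_smul
      measurableSet_Ioi hderiv strictMonoOn_div_one_add.injOn]
    exact (setIntegral_congr_fun measurableSet_Ioi hpull).symm

lemma betaIntegral_one_sub_one_add {a : ℂ} (ha : |a.re| < 1) (ha0 : a ≠ 0) :
    betaIntegral (1 - a) (1 + a) = π * a / sin (π * a) := by
  obtain ⟨hl, hr⟩ := abs_lt.1 ha
  rw [betaIntegral_eq_Gamma_mul_div _ _ (by simpa using hr) (by simp; linarith),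
    show 1 - a + (1 + a) = ((1 : ℕ) : ℂ) + 1 by push_cast; ring, Gamma_nat_eq_factorial,
    add_comm 1 a, Gamma_add_one a ha0, mul_left_comm, mul_comm (Gamma _), Gamma_mul_Gamma_one_sub]
  simp
  ring

section Homogeneous

variable {E : Type*} [NormedAddCommGroup E] [NormedSpace ℂ E] {f : ℂ → E} {c z : ℂ}

lemma smul_deriv_eq_of_homogeneous (hf : DifferentiableAt ℂ f z)
    (hom : ∀ t : ℝ, 0 < t → f (t * z) = (t : ℂ) ^ c • f z) : z • deriv f z = c • f z := by
  have hleft : HasDerivAt (fun t : ℝ => f (t * z)) (z • deriv f z) 1 := by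
    have hline : HasDerivAt (fun t : ℝ => (t : ℂ) * z) z 1 := by
      simpa using (ofRealCLM.hasDerivAt (x := 1)).mul_const z
    exact HasDerivAt.scomp_of_eq (1 : ℝ) hf.hasDerivAt hline (by simp)
  have hright : HasDerivAt (fun t : ℝ => (t : ℂ) ^ c • f z) (c • f z) 1 := by
    have hpow : HasDerivAt (fun w : ℂ => w ^ c) c ((1 : ℝ) : ℂ) := by
      simpa using (hasDerivAt_id (1 : ℂ)).cpow_const (c := c) one_mem_slitPlane
    exact hpow.comp_ofReal.smul_const (f z)
  exact hleft.unique (hright.congr_of_eventuallyEq ((lt_mem_nhds one_pos).mono hom))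

lemma eq_cpow_smul_of_homogeneous {U : Set ℂ} (hU : IsOpen U) (hconn : IsPreconnected U)
    (hslit : U ⊆ slitPlane) (h1 : 1 ∈ U) (hf : DifferentiableOn ℂ f U)
    (hom : ∀ z ∈ U, ∀ t : ℝ, 0 < t → f (t * z) = (t : ℂ) ^ c • f z) (hz : z ∈ U) :
    f z = z ^ c • f 1 := by
  have hderiv : ∀ w ∈ U, HasDerivAt (fun w => w ^ (-c) • f w) 0 w := by
    intro w hw
    have hfw := hf.differentiableAt (hU.mem_nhds hw)
    have hw0 : w ≠ 0 := slitPlane_ne_zero (hslit hw)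
    refine (((hasDerivAt_id w).cpow_const (hslit hw)).smul hfw.hasDerivAt).congr_deriv ?_
    have hpow : w ^ (-c) = w ^ (-c - 1) * w := by
      rw [cpow_sub _ _ hw0, cpow_one, div_mul_cancel₀ _ hw0]
    rw [id, hpow, mul_smul, smul_deriv_eq_of_homogeneous hfw (hom w hw)]
    module
  have hconst := hU.is_const_of_deriv_eq_zero hconn
    (fun w hw => (hderiv w hw).differentiableAt.differentiableWithinAt)
    (fun w hw => (hderiv w hw).deriv) hz h1
  have hzc : z ^ c ≠ 0 := by simp [cpow_eq_zero_iff, slitPlane_ne_zero (hslit hz)]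
  rwa [one_cpow, one_smul, cpow_neg, inv_smul_eq_iff₀ hzc] at hconst

end Homogeneous

section DominatedMellin

variable {E G : Type*} [NormedAddCommGroup E] [NormedSpace ℂ E] [NormedAddCommGroup G]
  [NormedSpace ℂ G] {g : ℝ → G} {s : ℂ}

lemma aestronglyMeasurable_cpow_smul {f : ℝ → E} {μ : Measure ℝ} (hf : AEStronglyMeasurable f μ)
    (c : ℂ) : AEStronglyMeasurable (fun t : ℝ => (t : ℂ) ^ c • f t) μ :=
  (measurable_ofReal.pow_const c).aestronglyMeasurable.smul hf

lemma mellinConvergent_of_norm_le {f : ℝ → E}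
    (hf : AEStronglyMeasurable f (volume.restrict (Set.Ioi 0))) (hg : MellinConvergent g s)
    (hle : ∀ t > 0, ‖f t‖ ≤ ‖g t‖) : MellinConvergent f s := by
  refine Integrable.mono hg (aestronglyMeasurable_cpow_smul hf _)
    ((ae_restrict_iff' measurableSet_Ioi).2 (.of_forall fun t ht => ?_))
  rw [norm_smul, norm_smul]
  gcongr
  exact hle t ht

lemma hasDerivAt_mellin_of_norm_le {F F' : ℂ → ℝ → E} {w : ℂ} {U : Set ℂ} (hU : U ∈ 𝓝 w)
    (hF : ∀ z, AEStronglyMeasurable (F z) (volume.restrict (Set.Ioi 0)))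
    (hFw : MellinConvergent (F w) s)
    (hF' : AEStronglyMeasurable (F' w) (volume.restrict (Set.Ioi 0)))
    (hg : MellinConvergent g s) (hle : ∀ z ∈ U, ∀ t > 0, ‖F' z t‖ ≤ ‖g t‖)
    (hderiv : ∀ z ∈ U, ∀ t > 0, HasDerivAt (fun z => F z t) (F' z t) z) :
    HasDerivAt (fun z => mellin (F z) s) (mellin (F' w) s) w := by
  refine (hasDerivAt_integral_of_dominated_loc_of_deriv_le
    (F := fun z (t : ℝ) => (t : ℂ) ^ (s - 1) • F z t)
    (F' := fun z (t : ℝ) => (t : ℂ) ^ (s - 1) • F' z t) hU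
    (.of_forall fun z => aestronglyMeasurable_cpow_smul (hF z) _) hFw
    (aestronglyMeasurable_cpow_smul hF' _)
    ((ae_restrict_iff' measurableSet_Ioi).2 (.of_forall fun t ht z hz => ?_)) hg.norm
    ((ae_restrict_iff' measurableSet_Ioi).2 (.of_forall fun t ht z hz => ?_))).2
  · rw [norm_smul, norm_smul]
    gcongr
    exact hle z hz t ht
  · exact (hderiv z hz t ht).const_smul _

end DominatedMellin

lemma hasMellin_finset_sum {ι E : Type*} [NormedAddCommGroup E] [NormedSpace ℂ E] (J : Finset ι)
    {f : ι → ℝ → E} {s : ℂ} (hf : ∀ i ∈ J, MellinConvergent (f i) s) :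
    HasMellin (fun t => ∑ i ∈ J, f i t) s (∑ i ∈ J, mellin (f i) s) := by
  constructor
  · simpa only [MellinConvergent, smul_sum] using! integrable_finsetSum J hf
  · simpa only [mellin, smul_sum] using! integral_finsetSum J hf

lemma mellinConvergent_mul_inv_one_add_pow_four {s : ℂ} (hs : -1 < s.re) (hs' : s.re < 3) :
    MellinConvergent (fun y : ℝ => (y : ℂ) * (1 + y : ℂ)⁻¹ ^ 4) s := by
  have h := (hasMellin_one_add_cpow_neg (s := s + 1) (t := 3 - s) (by simp; linarith)
    (by simpa using hs')).1
  have hexp : -(s + 1 + (3 - s)) = -((4 : ℕ) : ℂ) := by push_cast; ring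
  simpa only [hexp, cpow_neg, cpow_natCast, cpow_one, smul_eq_mul, inv_pow] using
    MellinConvergent.cpow_smul.2 h

lemma norm_mul_inv_one_add_pow_four {y : ℝ} (hy : 0 < y) :
    ‖(y : ℂ) * (1 + y : ℂ)⁻¹ ^ 4‖ = y * (1 + y)⁻¹ ^ 4 := by
  have h1 : ‖(1 + y : ℂ)‖ = 1 + y := by
    exact_mod_cast Complex.norm_of_nonneg (by positivity : 0 ≤ 1 + y)
  simp [h1, abs_of_pos hy]

/-- Twice the odd part in `y` of `(w - iy)⁻ᵐ`. Unlike `(w - iy)⁻ᵐ` itself, it vanishes at `y = 0`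
and for `m = 2` gains a power of decay at infinity, so that its Mellin transform converges on the
strip `-1 < re s < 3` as soon as `2 ≤ m` and `0 < re w`. -/
noncomputable def invPowOdd (m : ℕ) (w : ℂ) (y : ℝ) : ℂ :=
  (w - y * I)⁻¹ ^ m - (w + y * I)⁻¹ ^ m

lemma measurable_invPowOdd (m : ℕ) (w : ℂ) : Measurable (invPowOdd m w) := by
  unfold invPowOdd
  fun_prop

section RightHalfPlane

variable {m : ℕ} {s w : ℂ}

lemma add_mul_I_ne_zero (hw : 0 < w.re) (y : ℝ) : w + y * I ≠ 0 := by
  intro h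
  simpa [hw.ne'] using congrArg re h

lemma sub_mul_I_ne_zero (hw : 0 < w.re) (y : ℝ) : w - y * I ≠ 0 := by
  simpa [sub_eq_add_neg] using add_mul_I_ne_zero hw (-y)

/-- A constant `c`, locally bounded in `w` on the right half-plane, for which
`‖(w + iy)⁻¹‖ ≤ c / (1 + |y|)` for all real `y`. -/
noncomputable def decayConst (w : ℂ) : ℝ := 1 + (1 + ‖w‖) / w.re

lemma one_le_decayConst (hw : 0 < w.re) : 1 ≤ decayConst w :=
  le_add_of_nonneg_right (by positivity)

lemma continuousAt_decayConst (hw : 0 < w.re) : ContinuousAt decayConst w := by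
  unfold decayConst
  fun_prop (disch := exact hw.ne')

lemma norm_inv_add_mul_I_le (hw : 0 < w.re) (y : ℝ) :
    ‖(w + y * I)⁻¹‖ ≤ decayConst w * (1 + |y|)⁻¹ := by
  have hre : w.re ≤ ‖w + y * I‖ := by simpa using re_le_norm (w + y * I)
  have hy : |y| ≤ ‖w‖ + ‖w + y * I‖ := by
    simpa [add_comm] using norm_sub_le (w + y * I) w
  have hw' : 1 + ‖w‖ ≤ (1 + ‖w‖) / w.re * ‖w + y * I‖ := by
    rw [div_mul_eq_mul_div, le_div_iff₀ hw]
    gcongr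
  rw [norm_inv, ← div_eq_mul_inv, inv_eq_one_div,
    div_le_div_iff₀ (hw.trans_le hre) (by positivity), decayConst]
  linarith

lemma norm_inv_sub_mul_I_le (hw : 0 < w.re) (y : ℝ) :
    ‖(w - y * I)⁻¹‖ ≤ decayConst w * (1 + |y|)⁻¹ := by
  simpa [sub_eq_add_neg] using norm_inv_add_mul_I_le hw (-y)

lemma inv_sub_mul_I_sub_inv_add_mul_I (hw : 0 < w.re) (y : ℝ) :
    (w - y * I)⁻¹ - (w + y * I)⁻¹ = 2 * y * I * ((w - y * I)⁻¹ * (w + y * I)⁻¹) := by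
  have := add_mul_I_ne_zero hw y
  have := sub_mul_I_ne_zero hw y
  field_simp
  ring

lemma inv_sub_mul_I_add_inv_add_mul_I (hw : 0 < w.re) (y : ℝ) :
    (w - y * I)⁻¹ + (w + y * I)⁻¹ = 2 * w * ((w - y * I)⁻¹ * (w + y * I)⁻¹) := by
  have := add_mul_I_ne_zero hw y
  have := sub_mul_I_ne_zero hw y
  field_simp
  ring

lemma norm_inv_mul_inv_le (hw : 0 < w.re) {y : ℝ} (hy : 0 < y) :
    ‖(w - y * I)⁻¹ * (w + y * I)⁻¹‖ ≤ (decayConst w * (1 + y)⁻¹) ^ 2 := by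
  have hp := norm_inv_sub_mul_I_le hw y
  have hq := norm_inv_add_mul_I_le hw y
  have hD := one_le_decayConst hw
  rw [abs_of_pos hy] at hp hq
  rw [norm_mul, sq]
  gcongr

lemma norm_inv_sub_inv_le (hw : 0 < w.re) {y : ℝ} (hy : 0 < y) :
    ‖(w - y * I)⁻¹ - (w + y * I)⁻¹‖ ≤ 2 * y * (decayConst w * (1 + y)⁻¹) ^ 2 := by
  rw [inv_sub_mul_I_sub_inv_add_mul_I hw, norm_mul]
  gcongr
  · simp [abs_of_pos hy]
  · exact norm_inv_mul_inv_le hw hy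

lemma norm_invPowOdd_two_le (hw : 0 < w.re) {y : ℝ} (hy : 0 < y) :
    ‖invPowOdd 2 w y‖ ≤ 4 * ‖w‖ * decayConst w ^ 4 * (y * (1 + y)⁻¹ ^ 4) := by
  have hadd : ‖(w - y * I)⁻¹ + (w + y * I)⁻¹‖ ≤ 2 * ‖w‖ * (decayConst w * (1 + y)⁻¹) ^ 2 := by
    rw [inv_sub_mul_I_add_inv_add_mul_I hw, norm_mul]
    gcongr
    · simp
    · exact norm_inv_mul_inv_le hw hy
  rw [invPowOdd, sq_sub_sq, norm_mul]
  refine (mul_le_mul hadd (norm_inv_sub_inv_le hw hy) (norm_nonneg _) (by positivity)).trans_eq ?_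
  ring

lemma norm_invPowOdd_le (hm : 2 ≤ m) (hw : 0 < w.re) {y : ℝ} (hy : 0 < y) :
    ‖invPowOdd m w y‖ ≤
      (4 * ‖w‖ + 2 * m) * decayConst w ^ (m + 2) * (y * (1 + y)⁻¹ ^ 4) := by
  have hp := norm_inv_sub_mul_I_le hw y
  have hq := norm_inv_add_mul_I_le hw y
  have hbase := norm_invPowOdd_two_le hw hy
  have hsub := norm_inv_sub_inv_le hw hy
  have hD := one_le_decayConst hw
  rw [abs_of_pos hy] at hp hq
  unfold invPowOdd at hbase ⊢
  set p := (w - y * I)⁻¹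
  set q := (w + y * I)⁻¹
  set D := decayConst w
  set r := (1 + y)⁻¹
  have hr : 0 < r := by positivity
  have hr1 : r ≤ 1 := inv_le_one_of_one_le₀ (by linarith)
  induction m, hm using Nat.le_induction with
  | base =>
    refine hbase.trans ?_
    gcongr
    simp
  | succ m hm ih =>
    have hpD : ‖p‖ ≤ D := hp.trans (mul_le_of_le_one_right (by positivity) hr1)
    have hrm : r ^ m ≤ r ^ 2 := pow_le_pow_of_le_one hr.le hr1 hm
    calc ‖p ^ (m + 1) - q ^ (m + 1)‖ = ‖(p ^ m - q ^ m) * p + q ^ m * (p - q)‖ := by ring_nf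
      _ ≤ ‖p ^ m - q ^ m‖ * ‖p‖ + ‖q‖ ^ m * ‖p - q‖ := by
        simpa only [norm_mul, norm_pow] using
          norm_add_le ((p ^ m - q ^ m) * p) (q ^ m * (p - q))
      _ ≤ (4 * ‖w‖ + 2 * m) * D ^ (m + 2) * (y * r ^ 4) * D +
          (D * r) ^ m * (2 * y * (D * r) ^ 2) := by gcongr
      _ = (4 * ‖w‖ + 2 * m) * D ^ (m + 3) * (y * r ^ 4) +
          2 * D ^ (m + 2) * (y * (r ^ m * r ^ 2)) := by ring
      _ ≤ (4 * ‖w‖ + 2 * m) * D ^ (m + 3) * (y * r ^ 4) +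
          2 * D ^ (m + 3) * (y * (r ^ 2 * r ^ 2)) := by
        gcongr
        omega
      _ = (4 * ‖w‖ + 2 * (m + 1 : ℕ)) * D ^ (m + 1 + 2) * (y * r ^ 4) := by push_cast; ring

lemma mellinConvergent_invPowOdd (hs : -1 < s.re) (hs' : s.re < 3) (hm : 2 ≤ m)
    (hw : 0 < w.re) : MellinConvergent (invPowOdd m w) s := by
  refine mellinConvergent_of_norm_le (measurable_invPowOdd m w).aestronglyMeasurable
    ((mellinConvergent_mul_inv_one_add_pow_four hs hs').const_smul
      ((4 * ‖w‖ + 2 * m) * decayConst w ^ (m + 2))) fun y hy => ?_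
  have hD := one_le_decayConst hw
  refine (norm_invPowOdd_le hm hw hy).trans_eq ?_
  rw [norm_smul, norm_mul_inv_one_add_pow_four hy, Real.norm_of_nonneg (by positivity)]

lemma hasDerivAt_invPowOdd (hw : 0 < w.re) (y : ℝ) :
    HasDerivAt (fun z => invPowOdd m z y) (-m * invPowOdd (m + 1) w y) w := by
  have hinv : ∀ {z : ℂ}, z ≠ 0 → HasDerivAt (fun z => z⁻¹ ^ m) (-m * z⁻¹ ^ (m + 1)) z := by
    intro z hz
    refine ((hasDerivAt_inv hz).fun_pow m).congr_deriv ?_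
    rcases m with _ | m
    · simp
    · simp
      ring
  rw [invPowOdd, mul_sub]
  exact ((hinv (sub_mul_I_ne_zero hw y)).comp_sub_const w _).sub
    ((hinv (add_mul_I_ne_zero hw y)).comp_add_const w _)

lemma hasDerivAt_mellin_invPowOdd (hs : -1 < s.re) (hs' : s.re < 3) (hm : 2 ≤ m)
    (hw : 0 < w.re) : HasDerivAt (fun z => mellin (invPowOdd m z) s)
      (-m * mellin (invPowOdd (m + 1) w) s) w := by
  set bound : ℂ → ℝ := fun z => m * ((4 * ‖z‖ + 2 * (m + 1 : ℕ)) * decayConst z ^ (m + 3))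
  have hbound : ContinuousAt bound w := by
    have := continuousAt_decayConst hw
    fun_prop
  have hU : ∀ᶠ z in 𝓝 w, 0 < z.re ∧ bound z < bound w + 1 :=
    (continuous_re.continuousAt.eventually (lt_mem_nhds hw)).and
      (hbound.eventually (gt_mem_nhds (lt_add_one _)))
  have hD := one_le_decayConst hw
  rw [← smul_eq_mul, ← mellin_const_smul]
  refine hasDerivAt_mellin_of_norm_le (F' := fun z => -(m : ℂ) • invPowOdd (m + 1) z) hU
    (fun z => (measurable_invPowOdd m z).aestronglyMeasurable)
    (mellinConvergent_invPowOdd hs hs' hm hw)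
    ((measurable_invPowOdd _ w).const_smul _).aestronglyMeasurable
    ((mellinConvergent_mul_inv_one_add_pow_four hs hs').const_smul (bound w + 1))
    (fun z ⟨hz, hzw⟩ y hy => ?_) (fun z hz y _ => hasDerivAt_invPowOdd hz.1 y)
  rw [norm_smul, norm_mul_inv_one_add_pow_four hy, Real.norm_of_nonneg (by positivity)]
  calc ‖(-(m : ℂ) • invPowOdd (m + 1) z) y‖ = m * ‖invPowOdd (m + 1) z y‖ := by simp
    _ ≤ m * ((4 * ‖z‖ + 2 * (m + 1 : ℕ)) * decayConst z ^ (m + 3) * (y * (1 + y)⁻¹ ^ 4)) := by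
      gcongr
      exact norm_invPowOdd_le (by omega) hz hy
    _ = bound z * (y * (1 + y)⁻¹ ^ 4) := by simp only [bound]; ring
    _ ≤ (bound w + 1) * (y * (1 + y)⁻¹ ^ 4) := by gcongr

lemma mellin_invPowOdd_ofReal_mul (m : ℕ) (s w : ℂ) {t : ℝ} (ht : 0 < t) :
    mellin (invPowOdd m (t * w)) s = (t : ℂ) ^ (s - m) * mellin (invPowOdd m w) s := by
  have ht0 : (t : ℂ) ≠ 0 := ofReal_ne_zero.2 ht.ne'
  have hscale : invPowOdd m (t * w) = fun y => (t : ℂ)⁻¹ ^ m • invPowOdd m w (t⁻¹ * y) := by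
    ext y
    simp only [invPowOdd, smul_eq_mul, mul_sub, ← mul_pow, ← mul_inv]
    congr 3 <;> push_cast <;> field_simp
  rw [hscale, mellin_const_smul, mellin_comp_mul_left _ _ (inv_pos.2 ht), ofReal_inv,
    inv_cpow_ofReal_nonneg ht.le, cpow_neg, inv_inv, cpow_sub _ _ ht0, cpow_natCast,
    smul_eq_mul, smul_eq_mul, inv_pow]
  field_simp

lemma mul_mellin_invPowOdd_succ (hs : -1 < s.re) (hs' : s.re < 3) (hm : 2 ≤ m) (hw : 0 < w.re) :
    m * w * mellin (invPowOdd (m + 1) w) s = (m - s) * mellin (invPowOdd m w) s := by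
  have hderiv := hasDerivAt_mellin_invPowOdd hs hs' hm hw
  have euler := smul_deriv_eq_of_homogeneous hderiv.differentiableAt
    fun t ht => mellin_invPowOdd_ofReal_mul m s w ht
  rw [hderiv.deriv, smul_eq_mul, smul_eq_mul] at euler
  linear_combination -euler

lemma mellin_invPowOdd_two_one (hs : -1 < s.re) (hs' : s.re < 3) :
    mellin (invPowOdd 2 1) s = 2 * I * betaIntegral ((s + 1) / 2) ((3 - s) / 2) := by
  have hform : invPowOdd 2 1 = fun y : ℝ => (4 * I) • (y : ℂ) ^ (1 : ℂ) •
      (fun u : ℝ => (1 + u : ℂ) ^ (-((s + 1) / 2 + (3 - s) / 2))) (y ^ (2 : ℝ)) := by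
    ext y
    have hexp : -((s + 1) / 2 + (3 - s) / 2) = -((2 : ℕ) : ℂ) := by push_cast; ring
    have hsq : (1 + y * I) * (1 - y * I) = 1 + (y : ℂ) ^ 2 := by
      linear_combination -(y : ℂ) ^ 2 * I_sq
    have := mul_ne_zero (add_mul_I_ne_zero (w := 1) (by simp) y)
      (sub_mul_I_ne_zero (w := 1) (by simp) y)
    rw [invPowOdd, sq_sub_sq, inv_sub_mul_I_sub_inv_add_mul_I (by simp),
      inv_sub_mul_I_add_inv_add_mul_I (by simp)]
    simp only [hexp, cpow_neg, cpow_natCast, cpow_one, smul_eq_mul, Real.rpow_two, ofReal_pow,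
      ← hsq]
    field_simp
    ring
  have hbeta := hasMellin_one_add_cpow_neg (s := (s + 1) / 2) (t := (3 - s) / 2)
    (by simp; linarith) (by simp; linarith)
  rw [hform, mellin_const_smul, mellin_cpow_smul,
    mellin_comp_rpow (fun u : ℝ => (1 + u : ℂ) ^ (-((s + 1) / 2 + (3 - s) / 2)))]
  push_cast
  rw [hbeta.2]
  simp
  ring

lemma mellin_invPowOdd_two (hs : -1 < s.re) (hs' : s.re < 3) (hw : 0 < w.re) :
    mellin (invPowOdd 2 w) s =
      2 * I * betaIntegral ((s + 1) / 2) ((3 - s) / 2) * w ^ (s - 2) := by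
  have hdiff : DifferentiableOn ℂ (fun z => mellin (invPowOdd 2 z) s) {z | 0 < z.re} :=
    fun z hz => (hasDerivAt_mellin_invPowOdd hs hs' le_rfl hz).differentiableAt
      |>.differentiableWithinAt
  rw [← mellin_invPowOdd_two_one hs hs', mul_comm]
  exact eq_cpow_smul_of_homogeneous (isOpen_lt continuous_const continuous_re)
    (convex_halfSpace_re_gt 0).isPreconnected (fun _ => Or.inl) (by simp) hdiff
    (fun z _ t ht => mod_cast mellin_invPowOdd_ofReal_mul 2 s z ht) hw

lemma mellin_invPowOdd (hs : -1 < s.re) (hs' : s.re < 3) (hw : 0 < w.re) (k : ℕ) :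
    mellin (invPowOdd (k + 2) w) s = 2 * I * betaIntegral ((s + 1) / 2) ((3 - s) / 2) *
      w ^ (s - 2) * (gbinom (s - 2) k / (k + 1) * (-w⁻¹) ^ k) := by
  induction k with
  | zero => simp [mellin_invPowOdd_two hs hs' hw, gbinom]
  | succ k ih =>
    have hw0 : w ≠ 0 := by rintro rfl; simp at hw
    have hk : (k + 2 : ℂ) ≠ 0 := by exact_mod_cast (k + 1).succ_ne_zero
    have hk' : (k + 1 : ℂ) ≠ 0 := by exact_mod_cast k.succ_ne_zero
    have hrec := mul_mellin_invPowOdd_succ hs hs' (Nat.le_add_left 2 k) hw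
    push_cast at hrec
    refine mul_left_cancel₀ (mul_ne_zero hk hw0) ?_
    have hcast : ((k + 1 : ℕ) : ℂ) + 1 = k + 2 := by push_cast; ring
    rw [add_right_comm, hrec, ih, gbinom_succ, pow_succ, hcast]
    field_simp
    ring

end RightHalfPlane

lemma sub_pow_div_pow_add {K : Type*} [Field K] (N m : ℕ) (c : K) {z : K} (hz : z ≠ 0) :
    (z - c) ^ N / z ^ (N + m) = ∑ k ∈ range (N + 1), N.choose k * (-c) ^ k * z⁻¹ ^ (k + m) := by
  calc (z - c) ^ N / z ^ (N + m) = z⁻¹ ^ m * (-c * z⁻¹ + 1) ^ N := by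
        rw [show z - c = z * (-c * z⁻¹ + 1) by field_simp; ring, mul_pow, pow_add,
          inv_pow]
        field_simp
    _ = ∑ k ∈ range (N + 1), N.choose k * (-c) ^ k * z⁻¹ ^ (k + m) := by
        rw [add_pow, mul_sum]
        refine sum_congr rfl fun k _ => ?_
        ring

lemma sum_choose_smul_invPowOdd (N m : ℕ) (c : ℂ) {w : ℂ} (hw : 0 < w.re) (y : ℝ) :
    ∑ k ∈ range (N + 1), (N.choose k * (-c) ^ k) • invPowOdd (k + m) w y =
      (w - y * I - c) ^ N / (w - y * I) ^ (N + m) -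
        (w + y * I - c) ^ N / (w + y * I) ^ (N + m) := by
  simp only [sub_pow_div_pow_add N m c (sub_mul_I_ne_zero hw y),
    sub_pow_div_pow_add N m c (add_mul_I_ne_zero hw y), ← sum_sub_distrib, invPowOdd, smul_eq_mul,
    mul_sub]

lemma mul_pow_div_mul_pow_add_two_of_sq_eq_neg_one {K : Type*} [Field K] {c : K}
    (hc : c ^ 2 = -1) (a b : K) (N : ℕ) :
    (c * a) ^ N / (c * b) ^ (N + 2) = -(a ^ N / b ^ (N + 2)) := by
  have hc0 : c ≠ 0 := by rintro rfl; simp at hc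
  rw [mul_pow, mul_pow, pow_add c, hc]
  field_simp

lemma integrand_eq_cpow_smul_sum_invPowOdd (N : ℕ) (α : ℂ) {x : ℂ} (hx : x.im < 1)
    {y : ℝ} (hy : 0 < y) :
    ((y + x + I) ^ N * (y - x + I) ^ (N + 2) - (y - x - I) ^ N * (y + x - I) ^ (N + 2)) /
        ((y : ℂ) ^ α * (y + x - I) ^ (N + 2) * (y - x + I) ^ (N + 2)) =
      (y : ℂ) ^ (1 - α - 1) •
        ∑ k ∈ range (N + 1), (N.choose k * (-2) ^ k : ℂ) • invPowOdd (k + 2) (I * x + 1) y := by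
  have hw : 0 < (I * x + 1).re := by simpa using hx
  have hadd : I * x + 1 + y * I = I * (y + x - I) := by linear_combination I_sq
  have hsub : I * x + 1 - y * I = -I * (y - x + I) := by linear_combination I_sq
  have hadd2 : I * x + 1 + y * I - 2 = I * (y + x + I) := by linear_combination -I_sq
  have hsub2 : I * x + 1 - y * I - 2 = -I * (y - x - I) := by linear_combination -I_sq
  have hp := right_ne_zero_of_mul (hadd ▸ add_mul_I_ne_zero hw y)
  have hq := right_ne_zero_of_mul (hsub ▸ sub_mul_I_ne_zero hw y)
  have hy0 : (y : ℂ) ^ α ≠ 0 := by simp [cpow_eq_zero_iff, hy.ne']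
  rw [sum_choose_smul_invPowOdd N 2 2 hw, hadd2, hsub2, hadd, hsub,
    mul_pow_div_mul_pow_add_two_of_sq_eq_neg_one I_sq,
    mul_pow_div_mul_pow_add_two_of_sq_eq_neg_one (by simp), show 1 - α - 1 = -α by ring, cpow_neg,
    smul_eq_mul]
  field_simp
  ring

lemma exp_mul_I_cpow_one_add (α : ℂ) : exp (-I * π * α / 2) * I ^ (1 + α) = I := by
  rw [cpow_def_of_ne_zero I_ne_zero, log_I, ← exp_add]
  convert exp_pi_div_two_mul_I using 2
  ring

lemma mellin_invPowOdd_one_sub {α w : ℂ} (hα : |α.re| < 2) (hα0 : α ≠ 0) (hw : 0 < w.re) (k : ℕ) :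
    mellin (invPowOdd (k + 2) w) (1 - α) =
      I * π * α / (sin (π * α / 2) * w ^ (1 + α)) *
        (gbinom (-1 - α) k / (k + 1) * (-w⁻¹) ^ k) := by
  obtain ⟨hl, hr⟩ := abs_lt.1 hα
  have hbeta := betaIntegral_one_sub_one_add (a := α / 2) (by simpa [abs_div, div_lt_one] using hα)
    (by simpa using hα0)
  have hpow : w ^ (-1 - α) = (w ^ (1 + α))⁻¹ := by rw [← cpow_neg, neg_add']
  rw [mellin_invPowOdd (by simpa using by linarith) (by simpa using by linarith) hw,
    show (1 - α + 1) / 2 = 1 - α / 2 by ring, show (3 - (1 - α)) / 2 = 1 + α / 2 by ring, hbeta,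
    show 1 - α - 2 = -1 - α by ring, hpow, ← mul_div_assoc (π : ℂ)]
  ring

lemma sum_choose_smul_mellin_invPowOdd {α w : ℂ} (hα : |α.re| < 2) (hα0 : α ≠ 0) (hw : 0 < w.re)
    (N : ℕ) :
    ∑ k ∈ range (N + 1), (N.choose k * (-2) ^ k : ℂ) • mellin (invPowOdd (k + 2) w) (1 - α) =
      (π * α * exp (-I * π * α / 2) * I ^ (1 + α) / (sin (π * α / 2) * w ^ (1 + α))) *
        ((1 / (N + 1 : ℕ)) * ∑ k ∈ range (N + 1),
          gbinom (N + 1 : ℕ) (k + 1) * gbinom (-1 - α) k * (2 / w) ^ k) := by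
  rw [mul_assoc (π * α : ℂ), exp_mul_I_cpow_one_add, mul_sum, mul_sum]
  refine sum_congr rfl fun k _ => ?_
  have hpow : (2 / w) ^ k = (-2) ^ k * (-w⁻¹) ^ k := by rw [← mul_pow]; ring_nf
  rw [mellin_invPowOdd_one_sub hα hα0 hw, hpow, Nat.cast_add_one, gbinom_add_one_succ,
    gbinom_natCast, smul_eq_mul]
  field_simp

theorem integral_gn_general (α : ℂ) (hα : |α.re| < 2) (hα0 : α ≠ 0) (n : ℕ) (hn : 1 ≤ n) (x : ℂ)
    (hx : x.im < 1) :
    IntegrableOn (fun y : ℝ =>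
        ((y + x + I) ^ (n - 1) * (y - x + I) ^ (n + 1) -
            (y - x - I) ^ (n - 1) * (y + x - I) ^ (n + 1)) /
          ((y : ℂ) ^ α * (y + x - I) ^ (n + 1) * (y - x + I) ^ (n + 1))) (Set.Ioi 0) ∧
    (∫ y : ℝ in Set.Ioi 0,
        ((y + x + I) ^ (n - 1) * (y - x + I) ^ (n + 1) -
            (y - x - I) ^ (n - 1) * (y + x - I) ^ (n + 1)) /
          ((y : ℂ) ^ α * (y + x - I) ^ (n + 1) * (y - x + I) ^ (n + 1))) =
      (π * α * exp (-I * π * α / 2) * I ^ (1 + α) / (sin (π * α / 2) * (I * x + 1) ^ (1 + α))) *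
        ((1 / n) * ∑ k ∈ range n,
          gbinom n (k + 1) * gbinom (-1 - α) k * (2 / (I * x + 1)) ^ k) := by
  obtain ⟨N, rfl⟩ := Nat.exists_eq_add_of_le' hn
  obtain ⟨hs, hs'⟩ := abs_lt.1 hα
  have hw : 0 < (I * x + 1).re := by simpa using hx
  have hg := fun (y : ℝ) (hy : y ∈ Set.Ioi 0) => integrand_eq_cpow_smul_sum_invPowOdd N α hx hy
  have hmellin := hasMellin_finset_sum (range (N + 1)) fun k _ =>
    (mellinConvergent_invPowOdd (s := 1 - α) (by simpa using by linarith)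
      (by simpa using by linarith) (Nat.le_add_left 2 k) hw).const_smul (N.choose k * (-2) ^ k : ℂ)
  refine ⟨IntegrableOn.congr_fun hmellin.1 (fun y hy => (hg y hy).symm) measurableSet_Ioi,
    (setIntegral_congr_fun measurableSet_Ioi hg).trans (hmellin.2.trans ?_)⟩
  simp only [mellin_const_smul]
  exact sum_choose_smul_mellin_invPowOdd hα hα0 hw N

end

theorem integral_gn (α : ℝ) (hα : α ∈ Set.Ioo (0 : ℝ) 2) (n : ℕ) (hn : 1 ≤ n) (x : ℝ) :
    IntegrableOn (fun y : ℝ =>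
        (((y : ℂ) + (x : ℂ) + Complex.I) ^ (n - 1) * ((y : ℂ) - (x : ℂ) + Complex.I) ^ (n + 1) -
            ((y : ℂ) - (x : ℂ) - Complex.I) ^ (n - 1) *
              ((y : ℂ) + (x : ℂ) - Complex.I) ^ (n + 1)) /
          (((y ^ α : ℝ) : ℂ) * ((y : ℂ) + (x : ℂ) - Complex.I) ^ (n + 1) *
            ((y : ℂ) - (x : ℂ) + Complex.I) ^ (n + 1))) (Set.Ioi 0) ∧
    (∫ y in Set.Ioi (0 : ℝ),
        (((y : ℂ) + (x : ℂ) + Complex.I) ^ (n - 1) * ((y : ℂ) - (x : ℂ) + Complex.I) ^ (n + 1) -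
            ((y : ℂ) - (x : ℂ) - Complex.I) ^ (n - 1) *
              ((y : ℂ) + (x : ℂ) - Complex.I) ^ (n + 1)) /
          (((y ^ α : ℝ) : ℂ) * ((y : ℂ) + (x : ℂ) - Complex.I) ^ (n + 1) *
            ((y : ℂ) - (x : ℂ) + Complex.I) ^ (n + 1))) =
      ((Real.pi : ℂ) * (α : ℂ) * Complex.exp (-Complex.I * (Real.pi : ℂ) * (α : ℂ) / 2) *
            Complex.I ^ ((1 : ℂ) + (α : ℂ)) /
          ((Real.sin (Real.pi * α / 2) : ℂ) *
            (Complex.I * (x : ℂ) + 1) ^ ((1 : ℂ) + (α : ℂ)))) *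
        ((1 / (n : ℂ)) *
          ∑ k ∈ Finset.range n,
            gbinom (n : ℂ) (k + 1) * gbinom (-1 - (α : ℂ)) k *
              (2 / (Complex.I * (x : ℂ) + 1)) ^ k) := by
  have hα' : |(α : ℂ).re| < 2 := by simpa [abs_of_pos hα.1] using hα.2
  have h := integral_gn_general α hα' (Complex.ofReal_ne_zero.2 hα.1.ne') n hn x (by simp)
  exact ⟨h.1.congr_fun (fun y hy => by simp only [Complex.ofReal_cpow (le_of_lt hy)])
    measurableSet_Ioi, (setIntegral_congr_fun measurableSet_Ioi fun y hy => by
      simp only [Complex.ofReal_cpow (le_of_lt hy)]).trans (h.2.trans (by push_cast; rfl))⟩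
end

section
/- Let m ∈ ℕ, b ∈ ℂ, and z ∈ ℂ. Then ∑_{k=0}^{m} ((−m)_k·(b)_k / ((2)_k · k!))·z^k = (1/(m+1))·∑_{k=0}^{m} C(m+1,k+1)·C(−b,k)·z^k; moreover, if b ≠ 1, this common value also equals −(1/(b−1))·∑_{k=0}^{m} C(m,k)·C(1−b,k+1)·z^k. (With b = 1+α, this says the terminating Gauss hypergeometric series ₂F₁(−m, 1+α; 2; z) equals (1/(m+1))·∑_{k=0}^m C(m+1,k+1)·C(−1−α,k)·z^k = −(1/α)·∑_{k=0}^m C(m,k)·C(−α,k+1)·z^k.) -/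
open MeasureTheory Finset

/-!
Since `(-a)_k = (-1)^k k! C(a,k)` and `(2)_k = (k+1)!`, the `k`-th coefficient of `₂F₁(-a, b; 2; z)`
is `C(a,k) C(-b,k) / (k+1)`. The factor `1/(k+1)` can be absorbed into either binomial coefficient
by `(k+1) C(w+1,k+1) = (w+1) C(w,k)`, with `w = a` or `w = -b`, and the two choices give the two
expansions.
-/

theorem poch_neg (w : ℂ) (k : ℕ) : poch (-w) k = (-1) ^ k * k.factorial * gbinom w k := by
  have neg_factor (i : ℕ) : -w + i = -(w - i) := by ring
  simp only [poch, gbinom, neg_factor, prod_neg, card_range]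
  rw [mul_assoc, mul_div_cancel₀ _ (Nat.cast_ne_zero.mpr k.factorial_ne_zero)]

theorem poch_two (k : ℕ) : poch 2 k = (k + 1).factorial := by
  have h := Nat.factorial_mul_ascFactorial 1 k
  rw [Nat.factorial_one, one_mul, Nat.ascFactorial_eq_prod_range, add_comm 1 k] at h
  rw [← h, poch]
  push_cast
  norm_num

theorem succ_mul_gbinom_succ (w : ℂ) (k : ℕ) :
    (k + 1) * gbinom (w + 1) (k + 1) = (w + 1) * gbinom w k := by
  simp only [gbinom, prod_range_succ', Nat.factorial_succ, Nat.cast_mul, Nat.cast_add_one,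
    Nat.cast_zero, sub_zero, add_sub_add_right_eq_sub]
  field_simp

theorem gbinom_div_succ {w : ℂ} (hw : w + 1 ≠ 0) (k : ℕ) :
    gbinom w k / (k + 1) = 1 / (w + 1) * gbinom (w + 1) (k + 1) := by
  have hk : (k : ℂ) + 1 ≠ 0 := Nat.cast_add_one_ne_zero k
  rw [one_div_mul_eq_div, div_eq_div_iff hk hw]
  linear_combination -succ_mul_gbinom_succ w k

theorem hyperGeom_2F1_c_two_coeff (a b : ℂ) (k : ℕ) :
    poch (-a) k * poch b k / (poch 2 k * k.factorial) =
      gbinom a k * gbinom (-b) k / (k + 1) := by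
  have hk : (k : ℂ) + 1 ≠ 0 := Nat.cast_add_one_ne_zero k
  have hfact : (k.factorial : ℂ) ≠ 0 := Nat.cast_ne_zero.mpr k.factorial_ne_zero
  have hsign : (-1 : ℂ) ^ k * (-1) ^ k = 1 := pow_mul_pow_eq_one k (by norm_num)
  have hb : poch b k = (-1) ^ k * k.factorial * gbinom (-b) k := by
    simpa only [neg_neg] using poch_neg (-b) k
  rw [poch_neg, hb, poch_two, Nat.factorial_succ, Nat.cast_mul, Nat.cast_add_one]
  field_simp
  linear_combination gbinom a k * gbinom (-b) k * hsign

theorem hyperGeom_2F1_c_two_general (n : ℕ) (a b z : ℂ) :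
    (a ≠ -1 →
      ∑ k ∈ range n, poch (-a) k * poch b k / (poch 2 k * (k.factorial : ℂ)) * z ^ k =
        (1 / (a + 1)) * ∑ k ∈ range n, gbinom (a + 1) (k + 1) * gbinom (-b) k * z ^ k) ∧
    (b ≠ 1 →
      ∑ k ∈ range n, poch (-a) k * poch b k / (poch 2 k * (k.factorial : ℂ)) * z ^ k =
        -(1 / (b - 1)) * ∑ k ∈ range n, gbinom a k * gbinom (1 - b) (k + 1) * z ^ k) := by
  simp only [hyperGeom_2F1_c_two_coeff, mul_sum]
  refine ⟨fun ha => sum_congr rfl fun k _ => ?_, fun hb => sum_congr rfl fun k _ => ?_⟩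
  · have absorb := gbinom_div_succ (mt eq_neg_of_add_eq_zero_left ha) k
    linear_combination gbinom (-b) k * z ^ k * absorb
  · have hb' : -b + 1 ≠ 0 := by rwa [neg_add_eq_sub, sub_ne_zero, ne_comm]
    have absorb := gbinom_div_succ hb' k
    rw [neg_add_eq_sub, ← neg_sub b 1, one_div_neg_eq_neg_one_div, neg_sub] at absorb
    linear_combination gbinom a k * z ^ k * absorb

theorem hyperGeom_2F1_c_two (m : ℕ) (b z : ℂ) :
    (∑ k ∈ Finset.range (m + 1),
        poch (-(m : ℂ)) k * poch b k / (poch 2 k * (k.factorial : ℂ)) * z ^ k =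
      (1 / ((m : ℂ) + 1)) *
        ∑ k ∈ Finset.range (m + 1), gbinom ((m : ℂ) + 1) (k + 1) * gbinom (-b) k * z ^ k) ∧
    (b ≠ 1 →
      ∑ k ∈ Finset.range (m + 1),
          poch (-(m : ℂ)) k * poch b k / (poch 2 k * (k.factorial : ℂ)) * z ^ k =
        -(1 / (b - 1)) *
          ∑ k ∈ Finset.range (m + 1), gbinom (m : ℂ) k * gbinom (1 - b) (k + 1) * z ^ k) := by
  have h := hyperGeom_2F1_c_two_general (m + 1) m b z
  exact ⟨h.1 fun hm => Nat.cast_add_one_ne_zero m (eq_neg_iff_add_eq_zero.mp hm), h.2⟩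
end

section
/- Let n ∈ ℕ with n ≥ 1 and x ∈ ℝ. Then the function y ↦ (λ_n'(x−y) − λ_n'(x+y))/y is absolutely integrable on (0,∞), and (1/π)·∫₀^∞ (λ_n'(x−y) − λ_n'(x+y))/y dy = i·λ_n'(x). (This is the case α = 1 of the fractional Laplacian of the Higgins function, i.e. (−Δ)^(1/2)λ_n = H(λ_n') = i·λ_n' for n ≥ 1, where H is the Hilbert transform; note c_1/1 = 1/π.) -/
open MeasureTheory Finset

/-!
For `0 < Re a` the function `K(t) = 1/(it+a)` is the boundary value of a function holomorphic in the
lower half-plane and vanishing at infinity, so its Hilbert transform is `iK`. Here this comes from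
elementary integrals: the folded integral of `K` reduces to `∫₀^∞ dy/(c²+y²) = π/(2c)` with
`c = ix+a`, and the resolvent identity `K(s) - K(t) = i(t-s)K(s)K(t)` gives
`H(Kf) = K·(Hf + (i/π)∫Kf)`, where `∫Kf = 0` for `f` a positive power of `K`. Hence `Hg = ig` for
every polynomial `g` in `K` without constant term. For `a = 1` we have `λ_n = (1-2K)^n`, and
`λ_n' = 2in·K²(1-2K)^(n-1)` is such a polynomial.
-/

open Filter Topology Set

lemma integral_Ioi_comp_sub_add_comp_add {E : Type*} [NormedAddCommGroup E] [NormedSpace ℝ E]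
    {g : ℝ → E} (hg : Integrable g) (x : ℝ) :
    ∫ y in Ioi (0 : ℝ), (g (x - y) + g (x + y)) = ∫ t, g t := by
  have hadd : Integrable fun y => g (x + y) := hg.comp_add_left x
  have hreflect : ∫ y in Ioi (0 : ℝ), g (x - y) = ∫ y in Iic (0 : ℝ), g (x + y) := by
    simpa only [← sub_eq_add_neg, neg_zero] using integral_comp_neg_Ioi 0 fun y => g (x + y)
  rw [integral_add (hg.comp_sub_left x).integrableOn hadd.integrableOn, hreflect,
    intervalIntegral.integral_Iic_add_Ioi hadd.integrableOn hadd.integrableOn,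
    integral_add_left_eq_self]

lemma hasDerivAt_log_add_mul {c d : ℂ} {y : ℝ} (h : c + d * y ∈ Complex.slitPlane) :
    HasDerivAt (fun y : ℝ => Complex.log (c + d * y)) (d / (c + d * y)) y := by
  have hlin : HasDerivAt (fun y : ℝ => c + d * y) d y := by
    simpa using ((Complex.ofRealCLM.hasDerivAt (x := y)).const_mul d).const_add c
  exact hlin.clog_real h

lemma tendsto_log_add_mul_sub_log {d : ℂ} (hd : d ∈ Complex.slitPlane) (c : ℂ) :
    Tendsto (fun y : ℝ => Complex.log (c + d * y) - Real.log y) atTop (𝓝 (Complex.log d)) := by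
  have hinv : Tendsto (fun y : ℝ => ((y⁻¹ : ℝ) : ℂ)) atTop (𝓝 0) := by
    simpa [Function.comp_def] using
      (Complex.continuous_ofReal.tendsto 0).comp tendsto_inv_atTop_zero
  have hlim : Tendsto (fun y : ℝ => c * (y⁻¹ : ℝ) + d) atTop (𝓝 d) := by
    simpa using (hinv.const_mul c).add_const d
  refine (hlim.clog hd).congr' ?_
  filter_upwards [eventually_gt_atTop 0, hlim.eventually_ne (Complex.slitPlane_ne_zero hd)]
    with y hy hne
  have hfactor : c + d * y = y * (c * (y⁻¹ : ℝ) + d) := by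
    have : (y : ℂ) ≠ 0 := by exact_mod_cast hy.ne'
    push_cast
    field_simp
  rw [hfactor, Complex.log_ofReal_mul hy hne, add_sub_cancel_left]

/-- The Cauchy kernel `t ↦ 1/(it+a) = -i/(t-ia)` on the real line, with pole `ia`; the functions
transformed below are polynomials in it. -/
noncomputable def cauchyKernel (a : ℂ) (t : ℝ) : ℂ := (Complex.I * t + a)⁻¹

namespace cauchyKernel

lemma apply_add (a : ℂ) (x y : ℝ) :
    cauchyKernel a (x + y) = cauchyKernel (Complex.I * x + a) y := by
  simp only [cauchyKernel]
  push_cast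
  ring_nf

lemma norm_sq (a : ℂ) (t : ℝ) : ‖cauchyKernel a t‖ ^ 2 = (a.re ^ 2 + (t + a.im) ^ 2)⁻¹ := by
  rw [cauchyKernel, norm_inv, inv_pow, ← Complex.normSq_eq_norm_sq, Complex.normSq_apply]
  simp [sq]

lemma tendsto_cocompact (a : ℂ) : Tendsto (cauchyKernel a) (cocompact ℝ) (𝓝 0) := by
  refine tendsto_inv₀_cobounded.comp (tendsto_norm_atTop_iff_cobounded.mp ?_)
  refine tendsto_atTop_mono (fun t => ?_)
    (tendsto_atTop_add_const_right _ (-‖a‖) (tendsto_norm_cocompact_atTop (E := ℝ)))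
  simpa [sub_eq_add_neg] using norm_sub_norm_le (Complex.I * t) (-a)

section

variable {a : ℂ} (ha : a.re ≠ 0)

include ha

lemma denom_ne_zero (t : ℝ) : Complex.I * t + a ≠ 0 := fun h =>
  ha (by simpa using congrArg Complex.re h)

lemma sub_eq (s t : ℝ) : cauchyKernel a s - cauchyKernel a t =
    Complex.I * (t - s) * (cauchyKernel a s * cauchyKernel a t) := by
  have hs := denom_ne_zero ha s
  have ht := denom_ne_zero ha t
  simp only [cauchyKernel]
  field_simp
  ring

protected lemma hasDerivAt (t : ℝ) :
    HasDerivAt (cauchyKernel a) (-Complex.I * cauchyKernel a t ^ 2) t := by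
  have hlin : HasDerivAt (fun s : ℝ => Complex.I * s + a) Complex.I t := by
    simpa using ((Complex.ofRealCLM.hasDerivAt (x := t)).const_mul Complex.I).add_const a
  refine (hlin.inv (denom_ne_zero ha t)).congr_deriv ?_
  simp only [cauchyKernel, inv_pow, div_eq_mul_inv]

protected lemma continuous : Continuous (cauchyKernel a) :=
  continuous_iff_continuousAt.mpr fun t => (cauchyKernel.hasDerivAt ha t).continuousAt

lemma norm_le (t : ℝ) : ‖cauchyKernel a t‖ ≤ |a.re|⁻¹ := by
  rw [cauchyKernel, norm_inv]
  refine inv_anti₀ (abs_pos.mpr ha) ?_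
  simpa using Complex.abs_re_le_norm (Complex.I * t + a)

lemma memLp_two : MemLp (cauchyKernel a) 2 := by
  rw [memLp_two_iff_integrable_sq_norm (cauchyKernel.continuous ha).aestronglyMeasurable]
  refine (((integrable_inv_one_add_sq.comp_div ha).comp_add_right a.im).const_mul
    (a.re ^ 2)⁻¹).congr (.of_forall fun t => ?_)
  simp only [norm_sq]
  field_simp

lemma integrable_pow (k : ℕ) : Integrable fun t => cauchyKernel a t ^ (k + 2) := by
  have hsq : Integrable fun t => cauchyKernel a t ^ 2 := by
    simpa only [sq, Pi.mul_def] using (memLp_two ha).integrable_mul (memLp_two ha)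
  simp only [pow_add _ k 2]
  refine hsq.bdd_mul (c := |a.re|⁻¹ ^ k)
    ((cauchyKernel.continuous ha).pow k).aestronglyMeasurable (.of_forall fun t => ?_)
  rw [norm_pow]
  exact pow_le_pow_left₀ (norm_nonneg _) (norm_le ha t) k

lemma integral_pow_eq_zero (k : ℕ) : ∫ t, cauchyKernel a t ^ (k + 2) = 0 := by
  have hc : -Complex.I * (k + 1) ≠ 0 :=
    mul_ne_zero (neg_ne_zero.mpr Complex.I_ne_zero) (Nat.cast_add_one_ne_zero k)
  have hderiv (t : ℝ) : HasDerivAt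
      (fun t => cauchyKernel a t ^ (k + 1) / (-Complex.I * (k + 1)))
      (cauchyKernel a t ^ (k + 2)) t := by
    refine (((cauchyKernel.hasDerivAt ha t).pow (k + 1)).div_const _).congr_deriv ?_
    rw [div_eq_iff hc]
    push_cast
    ring
  have hlim : Tendsto (fun t => cauchyKernel a t ^ (k + 1) / (-Complex.I * (k + 1)))
      (cocompact ℝ) (𝓝 0) := by
    simpa using ((tendsto_cocompact a).pow (k + 1)).div_const (-Complex.I * (k + 1))
  rw [integral_of_hasDerivAt_of_tendsto hderiv (integrable_pow ha k)
    (hlim.mono_left atBot_le_cocompact) (hlim.mono_left atTop_le_cocompact), sub_zero]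

end

end cauchyKernel

lemma inv_sq_add_sq_eq_cauchyKernel_mul (c : ℂ) (y : ℝ) :
    (c ^ 2 + (y : ℂ) ^ 2)⁻¹ = cauchyKernel c y * cauchyKernel c (-y) := by
  simp only [cauchyKernel, ← mul_inv]
  congr 1
  push_cast
  linear_combination (y : ℂ) ^ 2 * Complex.I_sq

section

variable {c : ℂ}

lemma integrable_inv_sq_add_sq (hc : c.re ≠ 0) :
    Integrable fun y : ℝ => (c ^ 2 + (y : ℂ) ^ 2)⁻¹ := by
  have hK := cauchyKernel.memLp_two hc
  simp only [inv_sq_add_sq_eq_cauchyKernel_mul]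
  exact hK.integrable_mul (hK.comp_measurePreserving (Measure.measurePreserving_neg volume))

lemma hasDerivAt_log_add_mul_sub_log_div (hc : 0 < c.re) (y : ℝ) :
    HasDerivAt (fun y : ℝ =>
      (Complex.log (c + Complex.I * y) - Complex.log (c + -Complex.I * y)) / (2 * Complex.I * c))
      (c ^ 2 + (y : ℂ) ^ 2)⁻¹ y := by
  have hc₀ : c ≠ 0 := fun h => hc.ne' (by simp [h])
  have hplus : c + Complex.I * y ∈ Complex.slitPlane := Or.inl (by simpa using hc)
  have hminus : c + -Complex.I * y ∈ Complex.slitPlane := Or.inl (by simpa using hc)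
  have hfactor : c ^ 2 + (y : ℂ) ^ 2 = (c + Complex.I * y) * (c + -Complex.I * y) := by
    linear_combination (y : ℂ) ^ 2 * Complex.I_sq
  refine (((hasDerivAt_log_add_mul hplus).sub (hasDerivAt_log_add_mul hminus)).div_const
    _).congr_deriv ?_
  have hplus₀ := Complex.slitPlane_ne_zero hplus
  have hminus₀ := Complex.slitPlane_ne_zero hminus
  rw [hfactor]
  simp only [neg_mul, ← sub_eq_add_neg] at hminus₀ ⊢
  field_simp
  ring

lemma integral_Ioi_inv_sq_add_sq (hc : 0 < c.re) :
    ∫ y in Ioi (0 : ℝ), (c ^ 2 + (y : ℂ) ^ 2)⁻¹ = Real.pi / (2 * c) := by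
  have hc₀ : c ≠ 0 := fun h => hc.ne' (by simp [h])
  have hlim : Tendsto (fun y : ℝ =>
      (Complex.log (c + Complex.I * y) - Complex.log (c + -Complex.I * y)) / (2 * Complex.I * c))
      atTop (𝓝 ((Complex.log Complex.I - Complex.log (-Complex.I)) / (2 * Complex.I * c))) := by
    -- The logarithms cannot be merged: the quotient of their arguments tends to `-1`, on the cut.
    refine Tendsto.div_const ?_ _
    simpa only [sub_sub_sub_cancel_right] using
      (tendsto_log_add_mul_sub_log (Or.inr (by simp)) c).sub
        (tendsto_log_add_mul_sub_log (d := -Complex.I) (Or.inr (by simp)) c)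
  rw [integral_Ioi_of_hasDerivAt_of_tendsto'
    (fun y _ => hasDerivAt_log_add_mul_sub_log_div hc y)
    (integrable_inv_sq_add_sq hc.ne').integrableOn hlim, Complex.log_I, Complex.log_neg_I]
  simp only [neg_mul, sub_neg_eq_add, Complex.ofReal_zero, mul_zero, add_zero, sub_self,
    zero_div, sub_zero]
  field_simp
  ring

end

/-- `HasHilbertTransformAt f z x` says that the Hilbert transform of `f` at `x` converges to `z`.
The principal value is encoded by folding the line at `x`; the folded integral is required to
converge absolutely. -/
structure HasHilbertTransformAt (f : ℝ → ℂ) (z : ℂ) (x : ℝ) : Prop where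
  integrableOn : IntegrableOn (fun y : ℝ => (f (x - y) - f (x + y)) / (y : ℂ)) (Ioi 0)
  integral_eq :
    (1 / (Real.pi : ℂ)) * ∫ y in Ioi (0 : ℝ), (f (x - y) - f (x + y)) / (y : ℂ) = z

namespace HasHilbertTransformAt

variable {f g h : ℝ → ℂ} {z w : ℂ} {x : ℝ}

lemma of_folded_eqOn
    (heq : EqOn (fun y : ℝ => (f (x - y) - f (x + y)) / (y : ℂ)) h (Ioi 0))
    (hint : IntegrableOn h (Ioi 0)) (hz : (1 / (Real.pi : ℂ)) * ∫ y in Ioi (0 : ℝ), h y = z) :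
    HasHilbertTransformAt f z x where
  integrableOn := hint.congr_fun heq.symm measurableSet_Ioi
  integral_eq := by rw [setIntegral_congr_fun measurableSet_Ioi heq, hz]

protected lemma add (hf : HasHilbertTransformAt f z x) (hg : HasHilbertTransformAt g w x) :
    HasHilbertTransformAt (fun t => f t + g t) (z + w) x := by
  refine of_folded_eqOn (fun y _ => ?_) (hf.integrableOn.add hg.integrableOn) ?_
  · simp only [Pi.add_apply]
    ring
  · simp only [Pi.add_apply]
    rw [integral_add hf.integrableOn hg.integrableOn, mul_add, hf.integral_eq, hg.integral_eq]

protected lemma const_mul (hf : HasHilbertTransformAt f z x) (b : ℂ) :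
    HasHilbertTransformAt (fun t => b * f t) (b * z) x := by
  refine of_folded_eqOn (fun y _ => ?_) (hf.integrableOn.const_mul b) ?_
  · ring
  · rw [integral_const_mul, mul_left_comm, hf.integral_eq]

lemma cauchyKernel_mul {a : ℂ} (ha : a.re ≠ 0) (hf : HasHilbertTransformAt f z x)
    (hint : Integrable fun t => cauchyKernel a t * f t) :
    HasHilbertTransformAt (fun t => cauchyKernel a t * f t)
      (cauchyKernel a x * (z + Complex.I / Real.pi * ∫ t, cauchyKernel a t * f t)) x := by
  set G : ℝ → ℂ := fun t => cauchyKernel a t * f t with hG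
  have hfold : IntegrableOn (fun y => G (x - y) + G (x + y)) (Ioi 0) :=
    ((hint.comp_sub_left x).add (hint.comp_add_left x)).integrableOn
  refine of_folded_eqOn (h := fun y => cauchyKernel a x * ((f (x - y) - f (x + y)) / y) +
      Complex.I * cauchyKernel a x * (G (x - y) + G (x + y))) (fun y hy => ?_)
    ((hf.integrableOn.const_mul _).add (hfold.const_mul _)) ?_
  · have hy₀ : (y : ℂ) ≠ 0 := by exact_mod_cast (mem_Ioi.mp hy).ne'
    have hsub := cauchyKernel.sub_eq ha (x - y) x
    have hadd := cauchyKernel.sub_eq ha (x + y) x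
    push_cast at hsub hadd
    simp only [hG]
    field_simp
    linear_combination f (x - y) * hsub - f (x + y) * hadd
  · rw [integral_add (hf.integrableOn.const_mul _) (hfold.const_mul _), integral_const_mul,
      integral_const_mul, integral_Ioi_comp_sub_add_comp_add hint, ← hf.integral_eq]
    ring

end HasHilbertTransformAt

section

variable {a : ℂ} (ha : 0 < a.re) (x : ℝ)

include ha

lemma hasHilbertTransformAt_cauchyKernel :
    HasHilbertTransformAt (cauchyKernel a) (Complex.I * cauchyKernel a x) x := by
  set c : ℂ := Complex.I * x + a with hc
  have hre : 0 < c.re := by simpa [hc] using ha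
  refine .of_folded_eqOn (h := fun y => 2 * Complex.I * (c ^ 2 + (y : ℂ) ^ 2)⁻¹) (fun y hy => ?_)
    ((integrable_inv_sq_add_sq hre.ne').const_mul _).integrableOn ?_
  · have hy₀ : (y : ℂ) ≠ 0 := by exact_mod_cast (mem_Ioi.mp hy).ne'
    have hsub := cauchyKernel.sub_eq hre.ne' (-y) y
    simp only [sub_eq_add_neg x, cauchyKernel.apply_add, ← hc, hsub,
      inv_sq_add_sq_eq_cauchyKernel_mul]
    push_cast
    field_simp
    ring
  · have hpi : (Real.pi : ℂ) ≠ 0 := by exact_mod_cast Real.pi_ne_zero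
    rw [integral_const_mul, integral_Ioi_inv_sq_add_sq hre, cauchyKernel, ← hc]
    field_simp

lemma hasHilbertTransformAt_cauchyKernel_pow (k : ℕ) :
    HasHilbertTransformAt (fun t => cauchyKernel a t ^ (k + 1))
      (Complex.I * cauchyKernel a x ^ (k + 1)) x := by
  induction k with
  | zero => simpa using hasHilbertTransformAt_cauchyKernel ha x
  | succ k ih =>
    have hpow (t : ℝ) : cauchyKernel a t * cauchyKernel a t ^ (k + 1) =
        cauchyKernel a t ^ (k + 2) := (pow_succ' _ _).symm
    have hmul := ih.cauchyKernel_mul ha.ne'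
      (by simpa only [hpow] using cauchyKernel.integrable_pow ha.ne' k)
    simpa only [hpow, cauchyKernel.integral_pow_eq_zero ha.ne', mul_zero, add_zero,
      mul_left_comm (cauchyKernel a x)] using hmul

open Polynomial in
lemma hasHilbertTransformAt_cauchyKernel_mul_eval (p : ℂ[X]) :
    HasHilbertTransformAt (fun t => cauchyKernel a t * p.eval (cauchyKernel a t))
      (Complex.I * (cauchyKernel a x * p.eval (cauchyKernel a x))) x := by
  induction p using Polynomial.induction_on' with
  | add p q hp hq => simpa only [eval_add, mul_add] using hp.add hq
  | monomial k b =>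
    simpa only [eval_monomial, pow_succ', mul_left_comm b, mul_left_comm Complex.I b] using
      (hasHilbertTransformAt_cauchyKernel_pow ha x k).const_mul b

end

lemma higgins_natCast (n : ℕ) : higgins n = fun t => (1 - 2 * cauchyKernel 1 t) ^ n := by
  funext t
  have ht : Complex.I * t + 1 ≠ 0 := cauchyKernel.denom_ne_zero (by simp) t
  simp only [higgins, zpow_natCast, cauchyKernel]
  congr 1
  field_simp
  ring

lemma higgins'_natCast (n : ℕ) (t : ℝ) : higgins' n t =
    2 * Complex.I * n * cauchyKernel 1 t ^ 2 * (1 - 2 * cauchyKernel 1 t) ^ (n - 1) := by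
  have hK := cauchyKernel.hasDerivAt (a := 1) (by simp) t
  rw [higgins', higgins_natCast, (((hK.const_mul 2).const_sub 1).fun_pow n).deriv]
  ring

open Polynomial in
lemma hasHilbertTransformAt_higgins' (n : ℕ) (x : ℝ) :
    HasHilbertTransformAt (higgins' n) (Complex.I * higgins' n x) x := by
  have heval (t : ℝ) : higgins' n t = cauchyKernel 1 t *
      (C (2 * Complex.I * n) * X * (1 - 2 * X) ^ (n - 1) : ℂ[X]).eval (cauchyKernel 1 t) := by
    simp only [higgins'_natCast, eval_mul, eval_C, eval_X, eval_pow, eval_sub, eval_one, eval_ofNat]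
    ring
  rw [funext heval]
  exact hasHilbertTransformAt_cauchyKernel_mul_eval (by simp) x _

theorem fracLap_higgins_alpha_one (n : ℕ) (hn : 1 ≤ n) (x : ℝ) :
    IntegrableOn (fun y : ℝ =>
        (higgins' (n : ℤ) (x - y) - higgins' (n : ℤ) (x + y)) / (y : ℂ)) (Set.Ioi 0) ∧
    (1 / (Real.pi : ℂ)) *
        ∫ y in Set.Ioi (0 : ℝ),
          (higgins' (n : ℤ) (x - y) - higgins' (n : ℤ) (x + y)) / (y : ℂ) =
      Complex.I * higgins' (n : ℤ) x := by
  have h := hasHilbertTransformAt_higgins' n x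
  exact ⟨h.integrableOn, h.integral_eq⟩
end

section
/- For all n, m ∈ ℤ, the function x ↦ λ_n(x)·conj(λ_m(x))/(π·(1+x²)) is absolutely integrable on ℝ, and ∫_ℝ λ_n(x)·conj(λ_m(x))/(π·(1+x²)) dx equals 1 if n = m and 0 otherwise. (That is, the complex Higgins functions {λ_n} form an orthonormal family in L²(ℝ) with weight w(x) = 1/(π(1+x²)).) -/
open MeasureTheory Finset

/-!
On the real line the Möbius map `x ↦ (ix - 1) / (ix + 1)` is unimodular and tends to `1` at both
ends, and its logarithmic derivative is `-2i / (1 + x ^ 2)`. Unimodularity gives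
`λ_n * conj λ_m = λ_(n - m)`, and the logarithmic derivative makes the weight `1 / (π (1 + x ^ 2))`
times `λ_k` a constant multiple of `λ_k'` for `k ≠ 0`. The integral is then the difference of the
two equal limits, so it vanishes; for `k = 0` it is the total mass of the Cauchy distribution.
-/

open Filter Topology Bornology
open Complex (I)
open scoped ComplexConjugate

section Cayley

/-- The Cayley transform `z ↦ (iz - 1) / (iz + 1)` on the whole complex plane, whose restriction to
the real line is the base of the Higgins functions. At its pole `z = i` it takes the junk
value `0`. -/
noncomputable def cayley (z : ℂ) : ℂ := (I * z - 1) / (I * z + 1)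

variable {z : ℂ}

lemma one_add_sq_eq_mul (z : ℂ) : 1 + z ^ 2 = (I * z + 1) * -(I * z - 1) := by
  linear_combination z ^ 2 * Complex.I_sq

lemma I_mul_add_one_ne_zero (hz : 1 + z ^ 2 ≠ 0) : I * z + 1 ≠ 0 :=
  left_ne_zero_of_mul (one_add_sq_eq_mul z ▸ hz)

lemma I_mul_sub_one_ne_zero (hz : 1 + z ^ 2 ≠ 0) : I * z - 1 ≠ 0 :=
  neg_ne_zero.1 (right_ne_zero_of_mul (one_add_sq_eq_mul z ▸ hz))

lemma cayley_ne_zero (hz : 1 + z ^ 2 ≠ 0) : cayley z ≠ 0 :=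
  div_ne_zero (I_mul_sub_one_ne_zero hz) (I_mul_add_one_ne_zero hz)

lemma hasDerivAt_cayley (hz : 1 + z ^ 2 ≠ 0) :
    HasDerivAt cayley (-2 * I / (1 + z ^ 2) * cayley z) z := by
  have hadd := I_mul_add_one_ne_zero hz
  have hsub := I_mul_sub_one_ne_zero hz
  have hlin : HasDerivAt (fun w => I * w) I z := by simpa using (hasDerivAt_id z).const_mul I
  refine ((hlin.sub_const 1).fun_div (hlin.add_const 1) hadd).congr_deriv ?_
  rw [one_add_sq_eq_mul, cayley]
  field_simp
  ring

lemma hasDerivAt_cayley_zpow (hz : 1 + z ^ 2 ≠ 0) (k : ℤ) :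
    HasDerivAt (fun w => cayley w ^ k) (-2 * I * k / (1 + z ^ 2) * cayley z ^ k) z := by
  have hne := cayley_ne_zero hz
  refine ((hasDerivAt_zpow k _ (Or.inl hne)).comp z (hasDerivAt_cayley hz)).congr_deriv ?_
  rw [zpow_sub_one₀ hne]
  field_simp

lemma tendsto_cayley_cobounded : Tendsto cayley (cobounded ℂ) (𝓝 1) := by
  have hden : Tendsto (fun z => I * z + 1) (cobounded ℂ) (cobounded ℂ) :=
    (tendsto_add_const_cobounded 1).comp (tendsto_mul_left_cobounded Complex.I_ne_zero)
  have hlim : Tendsto (fun z => 1 - 2 * (I * z + 1)⁻¹) (cobounded ℂ) (𝓝 1) := by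
    simpa using ((tendsto_inv₀_cobounded.comp hden).const_mul 2).const_sub 1
  have hne : ∀ᶠ z in cobounded ℂ, I * z + 1 ≠ 0 := hden.eventually_ne_cobounded 0
  refine hlim.congr' (hne.mono fun z hz => ?_)
  rw [cayley]
  field_simp
  ring

lemma one_add_ofReal_sq_ne_zero (x : ℝ) : 1 + (x : ℂ) ^ 2 ≠ 0 := by
  exact_mod_cast (by positivity : 1 + x ^ 2 ≠ 0)

lemma norm_cayley_ofReal (x : ℝ) : ‖cayley x‖ = 1 := by
  have hconj : conj (I * x + 1) = -(I * x - 1) := by simp [neg_add_eq_sub]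
  have hnorm : ‖I * (x : ℂ) - 1‖ = ‖I * (x : ℂ) + 1‖ := by
    rw [← norm_neg, ← hconj, Complex.norm_conj]
  have hne := I_mul_add_one_ne_zero (one_add_ofReal_sq_ne_zero x)
  rw [cayley, norm_div, hnorm, div_self (norm_ne_zero_iff.2 hne)]

end Cayley

section Higgins

lemma higgins_eq_cayley_zpow (k : ℤ) (x : ℝ) : higgins k x = cayley x ^ k := rfl

lemma higgins_zero (x : ℝ) : higgins 0 x = 1 := zpow_zero _

lemma norm_higgins (k : ℤ) (x : ℝ) : ‖higgins k x‖ = 1 := by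
  rw [higgins_eq_cayley_zpow, norm_zpow, norm_cayley_ofReal, one_zpow]

lemma higgins_mul_conj_higgins (n m : ℤ) (x : ℝ) :
    higgins n x * conj (higgins m x) = higgins (n - m) x := by
  have hne : cayley x ≠ 0 := cayley_ne_zero (one_add_ofReal_sq_ne_zero x)
  rw [← Complex.inv_eq_conj (norm_higgins m x)]
  simp only [higgins_eq_cayley_zpow]
  rw [zpow_sub₀ hne, div_eq_mul_inv]

lemma hasDerivAt_higgins (k : ℤ) (x : ℝ) :
    HasDerivAt (higgins k) (-2 * I * k / (1 + (x : ℂ) ^ 2) * higgins k x) x :=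
  (hasDerivAt_cayley_zpow (one_add_ofReal_sq_ne_zero x) k).comp_ofReal

lemma continuous_higgins (k : ℤ) : Continuous (higgins k) :=
  continuous_iff_continuousAt.2 fun x => (hasDerivAt_higgins k x).continuousAt

lemma tendsto_higgins_cobounded (k : ℤ) : Tendsto (higgins k) (cobounded ℝ) (𝓝 1) := by
  have hcayley : Tendsto (fun x : ℝ => cayley x) (cobounded ℝ) (𝓝 1) :=
    tendsto_cayley_cobounded.comp (RCLike.tendsto_ofReal_cobounded_cobounded ℂ)
  have hpow := hcayley.zpow₀ k (Or.inl one_ne_zero)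
  rw [one_zpow] at hpow
  exact hpow

end Higgins

section CauchyWeight

lemma integral_inv_pi_mul_one_add_sq : ∫ x : ℝ, (Real.pi * (1 + x ^ 2))⁻¹ = 1 := by
  simp only [mul_inv]
  rw [integral_const_mul, integral_univ_inv_one_add_sq, inv_mul_cancel₀ Real.pi_ne_zero]

lemma integrable_div_pi_mul_one_add_sq {f : ℝ → ℂ} {C : ℝ} (hf : AEStronglyMeasurable f)
    (hC : ∀ᵐ x, ‖f x‖ ≤ C) :
    Integrable fun x : ℝ => f x / ((Real.pi * (1 + x ^ 2) : ℝ) : ℂ) := by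
  have hweight : Integrable fun x : ℝ => (((Real.pi * (1 + x ^ 2))⁻¹ : ℝ) : ℂ) := by
    simp only [mul_inv]
    exact (integrable_inv_one_add_sq.const_mul _).ofReal
  simpa only [Complex.ofReal_inv, ← div_eq_mul_inv] using hweight.bdd_mul hf hC

lemma integrable_higgins_div_pi_mul_one_add_sq (k : ℤ) :
    Integrable fun x : ℝ => higgins k x / ((Real.pi * (1 + x ^ 2) : ℝ) : ℂ) :=
  integrable_div_pi_mul_one_add_sq (continuous_higgins k).aestronglyMeasurable
    (.of_forall fun x => (norm_higgins k x).le)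

lemma hasDerivAt_primitive_higgins_div_pi_mul_one_add_sq {k : ℤ} (hk : k ≠ 0) (x : ℝ) :
    HasDerivAt (fun x => I / (2 * Real.pi * k) * higgins k x)
      (higgins k x / ((Real.pi * (1 + x ^ 2) : ℝ) : ℂ)) x := by
  refine ((hasDerivAt_higgins k x).const_mul _).congr_deriv ?_
  have hpi : (Real.pi : ℂ) ≠ 0 := Complex.ofReal_ne_zero.2 Real.pi_ne_zero
  have hk' : (k : ℂ) ≠ 0 := Int.cast_ne_zero.2 hk
  have hx := one_add_ofReal_sq_ne_zero x
  push_cast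
  field_simp
  rw [Complex.I_sq]
  ring

lemma integral_higgins_div_pi_mul_one_add_sq_of_ne_zero {k : ℤ} (hk : k ≠ 0) :
    ∫ x : ℝ, higgins k x / ((Real.pi * (1 + x ^ 2) : ℝ) : ℂ) = 0 := by
  have hlim := (tendsto_higgins_cobounded k).const_mul (I / (2 * Real.pi * k))
  rw [integral_of_hasDerivAt_of_tendsto
    (hasDerivAt_primitive_higgins_div_pi_mul_one_add_sq hk)
    (integrable_higgins_div_pi_mul_one_add_sq k)
    (hlim.mono_left IsOrderBornology.atBot_le_cobounded)
    (hlim.mono_left IsOrderBornology.atTop_le_cobounded), sub_self]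

lemma integral_higgins_zero_div_pi_mul_one_add_sq :
    ∫ x : ℝ, higgins 0 x / ((Real.pi * (1 + x ^ 2) : ℝ) : ℂ) = 1 := by
  simp only [higgins_zero, one_div, ← Complex.ofReal_inv]
  rw [integral_complex_ofReal, integral_inv_pi_mul_one_add_sq, Complex.ofReal_one]

end CauchyWeight

theorem higgins_orthonormal (n m : ℤ) :
    Integrable (fun x : ℝ =>
        higgins n x * (starRingEnd ℂ) (higgins m x) / ((Real.pi * (1 + x ^ 2) : ℝ) : ℂ)) ∧
    ∫ x : ℝ, higgins n x * (starRingEnd ℂ) (higgins m x) / ((Real.pi * (1 + x ^ 2) : ℝ) : ℂ) =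
      if n = m then 1 else 0 := by
  simp only [higgins_mul_conj_higgins]
  refine ⟨integrable_higgins_div_pi_mul_one_add_sq (n - m), ?_⟩
  split_ifs with h
  · rw [h, sub_self, integral_higgins_zero_div_pi_mul_one_add_sq]
  · exact integral_higgins_div_pi_mul_one_add_sq_of_ne_zero (sub_ne_zero.2 h)
end

section
/- For all n, m ∈ ℤ, the function x ↦ μ_n(x)·conj(μ_m(x)) is absolutely integrable on ℝ, and ∫_ℝ μ_n(x)·conj(μ_m(x)) dx equals π if n = m and 0 otherwise. (That is, the complex Christov functions {μ_n} form an orthogonal family in L²(ℝ), normalized by the factor 1/π.) -/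
open MeasureTheory Finset

/-!
Substituting `x = cot θ` with `θ ∈ (0, π)` turns `(ix - 1)/(ix + 1)` into `exp (2iθ)`. Hence the
Higgins functions become the characters of `ℝ / πℤ`, and since `μ_n = λ_n / (ix + 1)` the weight
`|ix + 1|⁻² = 1 / (1 + x²)` is exactly the Jacobian `|dθ/dx|`. The orthogonality of the Christov
functions is therefore that of the characters.
-/

section

open Complex (I exp)
open scoped ComplexConjugate Real

theorem hasDerivAt_arccot (x : ℝ) : HasDerivAt arccot (-(1 + x ^ 2)⁻¹) x :=
  (Real.hasDerivAt_arctan' x).const_sub (π / 2)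

theorem arccot_strictAnti : StrictAnti arccot :=
  fun _ _ hxy => sub_lt_sub_left (Real.arctan_strictMono hxy) _

theorem range_arccot : Set.range arccot = Set.Ioo 0 π :=
  calc Set.range arccot = (π / 2 - ·) '' Set.range Real.arctan := Set.range_comp (π / 2 - ·) _
    _ = Set.Ioo 0 π := by
      rw [Real.range_arctan, Set.image_const_sub_Ioo, sub_self, sub_neg_eq_add, add_halves]

section ChangeOfVariables

variable {E : Type*} [NormedAddCommGroup E] [NormedSpace ℝ E]

theorem integrable_inv_one_add_sq_smul_comp_arccot_iff (g : ℝ → E) :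
    Integrable (fun x : ℝ => (1 + x ^ 2)⁻¹ • g (arccot x)) ↔ IntegrableOn g (Set.Ioo 0 π) := by
  rw [← range_arccot, ← Set.image_univ,
    integrableOn_image_iff_integrableOn_deriv_smul_of_antitoneOn MeasurableSet.univ
      (fun x _ => (hasDerivAt_arccot x).hasDerivWithinAt) (arccot_strictAnti.antitone.antitoneOn _)]
  simp only [neg_neg, integrableOn_univ]

theorem integral_inv_one_add_sq_smul_comp_arccot (g : ℝ → E) :
    ∫ x : ℝ, (1 + x ^ 2)⁻¹ • g (arccot x) = ∫ θ in 0..π, g θ := by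
  rw [intervalIntegral.integral_of_le Real.pi_pos.le, integral_Ioc_eq_integral_Ioo, ← range_arccot,
    ← Set.image_univ, integral_image_eq_integral_deriv_smul_of_antitoneOn MeasurableSet.univ
      (fun x _ => (hasDerivAt_arccot x).hasDerivWithinAt) (arccot_strictAnti.antitone.antitoneOn _)]
  simp only [neg_neg, setIntegral_univ]

end ChangeOfVariables

theorem integral_fourier_neg_mul_fourier {T : ℝ} [hT : Fact (0 < T)] (n m : ℤ) (a : ℝ) :
    ∫ θ in a..a + T, fourier (-m) (θ : AddCircle T) * fourier n (θ : AddCircle T) =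
      if n = m then (T : ℂ) else 0 := by
  have hcoeff := fourierCoeff_eq_intervalIntegral (T := T) (fourier n) m a
  rw [fourierCoeff_fourier, one_div, eq_inv_smul_iff₀ hT.out.ne'] at hcoeff
  simpa [Pi.single_apply, eq_comm] using hcoeff.symm

theorem I_mul_ofReal_add_one_ne_zero (x : ℝ) : I * x + 1 ≠ 0 := by
  intro h
  simpa using congrArg Complex.re h

theorem I_mul_ofReal_add_one_mul_conj (x : ℝ) :
    (I * x + 1) * conj (I * x + 1) = ((1 + x ^ 2 : ℝ) : ℂ) := by
  rw [Complex.mul_conj, Complex.normSq_apply]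
  simp [pow_two]

theorem exp_arccot_mul_I (x : ℝ) : exp (arccot x * I) = (x + I) / (√(1 + x ^ 2) : ℝ) := by
  rw [Complex.exp_mul_I, ← Complex.ofReal_cos, ← Complex.ofReal_sin, arccot,
    Real.cos_pi_div_two_sub, Real.sin_pi_div_two_sub, Real.sin_arctan, Real.cos_arctan]
  push_cast
  ring

theorem exp_two_mul_arccot_mul_I (x : ℝ) :
    exp (2 * (arccot x * I)) = (I * x - 1) / (I * x + 1) := by
  have hsqrt : ((√(1 + x ^ 2) : ℝ) : ℂ) ^ 2 = 1 + (x : ℂ) ^ 2 := by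
    exact_mod_cast Real.sq_sqrt (by positivity : 0 ≤ 1 + x ^ 2)
  have hden : (1 + (x : ℂ) ^ 2) ≠ 0 := by
    exact_mod_cast (by positivity : (1 + x ^ 2 : ℝ) ≠ 0)
  calc
    exp (2 * (arccot x * I)) = exp (arccot x * I) ^ 2 := by
      rw [← Complex.exp_nat_mul, Nat.cast_ofNat]
    _ = (x + I) ^ 2 / (1 + (x : ℂ) ^ 2) := by rw [exp_arccot_mul_I, div_pow, hsqrt]
    _ = (I * x - 1) / (I * x + 1) := by
      rw [div_eq_div_iff hden (I_mul_ofReal_add_one_ne_zero x)]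
      linear_combination (I * x + 1 + 2 * x ^ 2) * Complex.I_sq

theorem higgins_eq_fourier (n : ℤ) (x : ℝ) :
    higgins n x = fourier n (arccot x : AddCircle π) := by
  have hpi : (π : ℂ) ≠ 0 := Complex.ofReal_ne_zero.2 Real.pi_ne_zero
  rw [higgins, ← exp_two_mul_arccot_mul_I, ← Complex.exp_int_mul, fourier_coe_apply]
  congr 1
  field_simp

theorem christov_eq_higgins_div (n : ℤ) (x : ℝ) :
    christov n x = higgins n x / (I * x + 1) := by
  rw [christov, higgins, div_zpow, zpow_add_one₀ (I_mul_ofReal_add_one_ne_zero x), div_div]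

theorem christov_mul_conj (n m : ℤ) (x : ℝ) :
    christov n x * conj (christov m x) =
      (1 + x ^ 2)⁻¹ •
        (fourier (-m) (arccot x : AddCircle π) * fourier n (arccot x : AddCircle π)) := by
  rw [christov_eq_higgins_div, christov_eq_higgins_div, map_div₀, div_mul_div_comm,
    I_mul_ofReal_add_one_mul_conj, higgins_eq_fourier, higgins_eq_fourier, ← fourier_neg,
    Complex.real_smul, Complex.ofReal_inv, inv_mul_eq_div, mul_comm (fourier n _)]

end

theorem christov_orthogonal (n m : ℤ) :
    Integrable (fun x : ℝ => christov n x * (starRingEnd ℂ) (christov m x)) ∧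
    ∫ x : ℝ, christov n x * (starRingEnd ℂ) (christov m x) =
      if n = m then (Real.pi : ℂ) else 0 := by
  have : Fact (0 < Real.pi) := ⟨Real.pi_pos⟩
  let g (θ : ℝ) : ℂ :=
    fourier (-m) (θ : AddCircle Real.pi) * fourier n (θ : AddCircle Real.pi)
  have hg : Continuous g := by fun_prop
  simp only [christov_mul_conj]
  constructor
  · exact (integrable_inv_one_add_sq_smul_comp_arccot_iff g).2
      (hg.integrableOn_Icc.mono_set Set.Ioo_subset_Icc_self)
  · calc ∫ x : ℝ, (1 + x ^ 2)⁻¹ • g (arccot x) = ∫ θ in 0..Real.pi, g θ :=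
        integral_inv_one_add_sq_smul_comp_arccot g
      _ = if n = m then (Real.pi : ℂ) else 0 := by
        simpa only [zero_add] using integral_fourier_neg_mul_fourier (T := Real.pi) n m 0
end
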